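/- Let Σ be a first-order signature. A class 𝒦 of Σ-structures is axiomatized by a set of basic Horn formulas if and only if 𝒦 is closed under isomorphisms, substructures, and reduced products. -/

import Mathlib

/-!
Common definitions: products, reduced products, basic Horn formulas,
bundled structures, diagrams, units.
-/

namespace ZFHorn

open FirstOrder Language Structure Filter Set

universe u v w u' v' w'

variable {L : FirstOrder.Language.{v, w}}

/-- The direct product structure on a dependent function type. -/
instance piStructure {ι : Type*} (M : ι → Type*) [∀ i, L.Structure (M i)] :
    L.Structure (∀ i, M i) where
  funMap f x i := funMap f fun k => x k i
  RelMap r x := ∀ i, RelMap r fun k => x k i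

/-- The reduced-product prestructure on `∀ i, M i` modulo a filter `F`:
functions act coordinatewise, and a relation holds precisely when it holds on a
set of coordinates belonging to `F`. -/
instance reducedProductPrestructure {ι : Type*} (F : Filter ι) (M : ι → Type*)
    [∀ i, L.Structure (M i)] : L.Prestructure (F.productSetoid M) :=
  { toStructure :=
      { funMap := fun {_} f x i => funMap f fun k => x k i
        RelMap := fun {_} r x => ∀ᶠ i in F, RelMap r fun k => x k i }
    fun_equiv := fun {n} f x y xy => by
      refine mem_of_superset (iInter_mem.2 xy) fun i hi => ?_
      simp only [Set.mem_iInter, Set.mem_setOf_eq] at hi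
      simp only [Set.mem_setOf_eq, hi]
    rel_equiv := fun {n} r x y xy => by
      rw [← iff_eq_eq]
      constructor
      · intro hx
        refine mem_of_superset (inter_mem hx (iInter_mem.2 xy)) ?_
        rintro i ⟨h1, h2⟩
        simp only [Set.mem_iInter, Set.mem_setOf_eq] at *
        rw [← funext h2]
        exact h1
      · intro hy
        refine mem_of_superset (inter_mem hy (iInter_mem.2 xy)) ?_
        rintro i ⟨h1, h2⟩
        simp only [Set.mem_iInter, Set.mem_setOf_eq] at *
        rw [funext h2]
        exact h1 }

/-- The reduced product `∏_F M i` of a family of structures modulo a filter,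
as a first-order structure. -/
instance reducedProductStructure {ι : Type*} (F : Filter ι) (M : ι → Type*)
    [∀ i, L.Structure (M i)] : L.Structure (F.Product M) :=
  Language.quotientStructure

instance productNonempty {ι : Type*} (F : Filter ι) (M : ι → Type*)
    [∀ i, Nonempty (M i)] : Nonempty (F.Product M) :=
  ⟨(↑(fun i => Classical.arbitrary (M i)) : F.Product M)⟩

section Horn

variable {α : Type u'}

/-- `orList φ [ψ₁, …, ψₖ]` is the disjunction `φ ∨ ψ₁ ∨ ⋯ ∨ ψₖ`. -/
def orList : L.Formula α → List (L.Formula α) → L.Formula α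
  | φ, [] => φ
  | φ, ψ :: l => φ ⊔ orList ψ l

/-- A list of formulas is a Horn list if each member is atomic or the negation of
an atomic formula, and at most one member is atomic. -/
def IsHornList (l : List (L.Formula α)) : Prop :=
  (∀ χ ∈ l, BoundedFormula.IsAtomic χ ∨
      ∃ θ : L.Formula α, BoundedFormula.IsAtomic θ ∧ χ = θ.not) ∧
    ∀ i j : Fin l.length,
      BoundedFormula.IsAtomic (l.get i) → BoundedFormula.IsAtomic (l.get j) → i = j

/-- A basic Horn formula is a disjunction `φ₀ ∨ ⋯ ∨ φₙ` in which at most one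
disjunct is atomic, the rest being negations of atomic formulas. -/
def IsBasicHorn (φ : L.Formula α) : Prop :=
  ∃ (ψ : L.Formula α) (l : List (L.Formula α)), φ = orList ψ l ∧ IsHornList (ψ :: l)

/-- A strict basic Horn formula (quasi-identity) is a basic Horn formula in which
at least one disjunct is atomic. -/
def IsQuasiIdentity (φ : L.Formula α) : Prop :=
  ∃ (ψ : L.Formula α) (l : List (L.Formula α)), φ = orList ψ l ∧ IsHornList (ψ :: l) ∧
    ∃ χ ∈ ψ :: l, BoundedFormula.IsAtomic χ

end Horn

/-- `SatAll M φ` means that every assignment of the free variables satisfies `φ` in `M`. -/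
def SatAll (M : Type u') [L.Structure M] {α : Type v'} (φ : L.Formula α) : Prop :=
  ∀ v : α → M, φ.Realize v

/-- A unit is a one-element structure in which every relation holds. -/
def IsUnit (L : FirstOrder.Language.{v, w}) (M : Type u') [L.Structure M] : Prop :=
  (∃ a : M, ∀ b : M, b = a) ∧
    ∀ (n : ℕ) (r : L.Relations n) (x : Fin n → M), RelMap r x

/-- A bundled nonempty `L`-structure. -/
structure SStruct (L : FirstOrder.Language.{v, w}) : Type (max (u + 1) v w) where
  /-- the underlying type -/
  carrier : Type u
  /-- the structure on the underlying type -/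
  struc : L.Structure carrier
  /-- the underlying type is nonempty -/
  nonempty : Nonempty carrier

attribute [instance] SStruct.struc SStruct.nonempty

instance : CoeSort (SStruct.{u} L) (Type u) :=
  ⟨SStruct.carrier⟩

/-- Bundle a nonempty structure. -/
def SStruct.of (M : Type u) [i : L.Structure M] [h : Nonempty M] : SStruct.{u} L :=
  ⟨M, i, h⟩

variable (L)

/-- A class of structures is closed under isomorphisms. -/
def ClosedUnderIso (K : Set (SStruct.{u} L)) : Prop :=
  ∀ M ∈ K, ∀ N : SStruct.{u} L, Nonempty ((M : Type u) ≃[L] (N : Type u)) → N ∈ K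

/-- A class of structures is closed under (nonempty) substructures. -/
def ClosedUnderSubstructures (K : Set (SStruct.{u} L)) : Prop :=
  ∀ M ∈ K, ∀ (S : L.Substructure (M : Type u)) (h : Nonempty S),
    (⟨S, inferInstance, h⟩ : SStruct.{u} L) ∈ K

/-- A class of structures is closed under reduced products (modulo proper filters). -/
def ClosedUnderReducedProducts (K : Set (SStruct.{u} L)) : Prop :=
  ∀ (ι : Type u) (F : Filter ι), F.NeBot → ∀ B : ι → SStruct.{u} L, (∀ i, B i ∈ K) →
    (⟨F.Product fun i => (B i : Type u), inferInstance, inferInstance⟩ : SStruct.{u} L) ∈ K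

/-- A class of structures is closed under homomorphic images. -/
def ClosedUnderHomImages (K : Set (SStruct.{u} L)) : Prop :=
  ∀ M ∈ K, ∀ (N : SStruct.{u} L) (f : (M : Type u) →[L] (N : Type u)),
    Function.Surjective f → N ∈ K

/-- A class of structures is closed under direct products. -/
def ClosedUnderProducts (K : Set (SStruct.{u} L)) : Prop :=
  ∀ (ι : Type u) (B : ι → SStruct.{u} L), (∀ i, B i ∈ K) →
    (⟨∀ i, (B i : Type u), inferInstance, inferInstance⟩ : SStruct.{u} L) ∈ K

/-- A class of structures is axiomatized by a set of formulas `Γ` if it consists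
exactly of those structures satisfying every formula of `Γ`. -/
def AxiomatizedBy (K : Set (SStruct.{u} L)) (Γ : Set (L.Formula ℕ)) : Prop :=
  ∀ M : SStruct.{u} L, M ∈ K ↔ ∀ φ ∈ Γ, SatAll (M : Type u) φ

/-- The positive diagram of `A`: all atomic `Σ(A)`-sentences true in `A`. -/
def DiagPlus (A : Type u') [L.Structure A] : Set ((L[[A]]).Sentence) :=
  {φ | BoundedFormula.IsAtomic φ ∧ A ⊨ φ}

/-- The negative diagram of `A`: all negated atomic `Σ(A)`-sentences true in `A`. -/
def DiagMinus (A : Type u') [L.Structure A] : Set ((L[[A]]).Sentence) :=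
  {φ | ∃ ψ : (L[[A]]).Sentence, BoundedFormula.IsAtomic ψ ∧ φ = ψ.not ∧ A ⊨ φ}

/-- The diagram of `A`. -/
def Diag (A : Type u') [L.Structure A] : Set ((L[[A]]).Sentence) :=
  DiagPlus L A ∪ DiagMinus L A


section Aux

variable {L}

theorem realize_orList {α : Type u'} {M : Type v'} [L.Structure M] (v : α → M)
    (ψ : L.Formula α) (l : List (L.Formula α)) :
    (orList ψ l).Realize v ↔ ∃ χ ∈ ψ :: l, χ.Realize v := by
  induction l generalizing ψ with
  | nil => simp [orList]
  | cons θ l ih =>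
    rw [orList, Formula.realize_sup, ih]
    simp

theorem not_isAtomic_not {α : Type u'} (θ : L.Formula α) :
    ¬ BoundedFormula.IsAtomic θ.not := by
  intro h
  cases h

theorem atomic_realize_embedding {α : Type u'} {M : Type v'} {N : Type w'} [L.Structure M]
    [L.Structure N] (e : N ↪[L] M) {φ : L.Formula α} (h : BoundedFormula.IsAtomic φ)
    (v : α → N) : φ.Realize (e ∘ v) ↔ φ.Realize v := by
  cases h with
  | equal t₁ t₂ =>
    have h1 := HomClass.realize_term e (t := t₁) (v := Sum.elim v (default : Fin 0 → N))
    have h2 := HomClass.realize_term e (t := t₂) (v := Sum.elim v (default : Fin 0 → N))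
    simp only [Formula.Realize, BoundedFormula.realize_bdEqual]
    rw [← e.injective.eq_iff, ← h1, ← h2, Sum.comp_elim]
    rw [Subsingleton.elim (e ∘ (default : Fin 0 → N)) default]
  | rel R ts =>
    simp only [Formula.Realize, BoundedFormula.realize_rel]
    rw [← e.map_rel R]
    have : ∀ k, (ts k).realize (Sum.elim (e ∘ v) default)
        = e ((ts k).realize (Sum.elim v (default : Fin 0 → N))) := by
      intro k
      rw [← HomClass.realize_term e, Sum.comp_elim]
      rw [Subsingleton.elim (e ∘ (default : Fin 0 → N)) default]
    simp only [this]
    rfl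

theorem satAll_embedding {α : Type u'} {M : Type v'} {N : Type w'} [L.Structure M]
    [L.Structure N] (e : N ↪[L] M) {φ : L.Formula α} (h : IsBasicHorn φ)
    (hM : SatAll M φ) : SatAll N φ := by
  obtain ⟨ψ, l, rfl, hl, -⟩ := h
  intro v
  obtain ⟨χ, hχ, hr⟩ := (realize_orList _ _ _).1 (hM (e ∘ v))
  refine (realize_orList _ _ _).2 ⟨χ, hχ, ?_⟩
  rcases hl χ hχ with h | ⟨θ, h, rfl⟩
  · exact (atomic_realize_embedding e h v).1 hr
  · rw [Formula.realize_not] at hr ⊢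
    rwa [← atomic_realize_embedding e h v]

theorem term_realize_rp {ι : Type*} (F : Filter ι) (M : ι → Type*)
    [∀ i, L.Structure (M i)] {β : Type*} (x : β → ∀ i, M i) (t : L.Term β) :
    (t.realize fun b => (Quotient.mk (F.productSetoid M) (x b) : F.Product M)) =
      (Quotient.mk (F.productSetoid M) (fun i => t.realize fun b => x b i) : F.Product M) := by
  induction t with
  | var => rfl
  | func f ts ih =>
    simp only [Term.realize, ih]
    exact funMap_quotient_mk' (F.productSetoid M) f _

theorem atomic_realize_rp {ι : Type*} (F : Filter ι) (M : ι → Type*)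
    [∀ i, L.Structure (M i)] {β : Type*} (x : β → ∀ i, M i) {φ : L.Formula β}
    (h : BoundedFormula.IsAtomic φ) :
    (φ.Realize fun b => (Quotient.mk (F.productSetoid M) (x b) : F.Product M)) ↔
      ∀ᶠ i in F, φ.Realize fun b => x b i := by
  have key : ∀ t : L.Term (β ⊕ Fin 0),
      t.realize (Sum.elim (fun b => (Quotient.mk (F.productSetoid M) (x b) : F.Product M)) default)
        = (Quotient.mk (F.productSetoid M)
          (fun i => t.realize (Sum.elim (fun b => x b i) default)) : F.Product M) := by
    intro t
    have := term_realize_rp F M (Sum.elim x (fun k : Fin 0 => k.elim0)) t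
    convert! this using 2
    · funext b
      rcases b with b | b
      · rfl
      · exact b.elim0
    · funext i
      congr 1
      funext b
      rcases b with b | b
      · rfl
      · exact b.elim0
  cases h with
  | equal t₁ t₂ =>
    simp only [Formula.Realize, BoundedFormula.realize_bdEqual, key]
    exact Quotient.eq''
  | rel R ts =>
    simp only [Formula.Realize, BoundedFormula.realize_rel, key]
    exact relMap_quotient_mk' (F.productSetoid M) R _

theorem atomic_realize_rp' {ι : Type*} (F : Filter ι) (M : ι → Type*)
    [∀ i, L.Structure (M i)] {β : Type*} (w : β → F.Product M) (x : β → ∀ i, M i)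
    (hw : w = fun b => Quotient.mk (F.productSetoid M) (x b)) {φ : L.Formula β}
    (h : BoundedFormula.IsAtomic φ) :
    φ.Realize w ↔ ∀ᶠ i in F, φ.Realize fun b => x b i := by
  subst hw
  exact atomic_realize_rp F M x h

theorem satAll_rp {ι : Type*} (F : Filter ι) [F.NeBot] (M : ι → Type*)
    [∀ i, L.Structure (M i)] {β : Type*} {φ : L.Formula β}
    (h : IsBasicHorn φ) (hM : ∀ i, SatAll (M i) φ) : SatAll (F.Product M) φ := by
  obtain ⟨ψ, l, rfl, hl, hu⟩ := h
  intro v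
  obtain ⟨x, hx⟩ : ∃ x : β → ∀ i, M i,
      v = fun b => (Quotient.mk (F.productSetoid M) (x b) : F.Product M) :=
    ⟨fun b => Quotient.out (v b), funext fun b => (Quotient.out_eq (v b)).symm⟩
  rw [realize_orList]
  by_contra hn
  push Not at hn
  have hev : ∀ᶠ i in F, ∀ χ ∈ {χ | χ ∈ ψ :: l}, ¬ BoundedFormula.IsAtomic χ →
      ¬ χ.Realize fun b => x b i := by
    rw [Filter.eventually_all_finite (List.finite_toSet _)]
    intro χ hχ
    rcases hl χ hχ with h | ⟨θ, h, rfl⟩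
    · exact Eventually.of_forall fun i hi => absurd h hi
    · have := hn _ hχ
      rw [Formula.realize_not, not_not, atomic_realize_rp' F M v x hx h] at this
      filter_upwards [this] with i hi _
      rwa [Formula.realize_not, not_not]
  have hev2 : ∀ᶠ i in F, ∃ χ ∈ ψ :: l, BoundedFormula.IsAtomic χ ∧ χ.Realize fun b => x b i := by
    filter_upwards [hev] with i hi
    obtain ⟨χ, hχ, hr⟩ := (realize_orList _ _ _).1 (hM i (fun b => x b i))
    exact ⟨χ, hχ, by_contra fun hc => hi χ hχ hc hr, hr⟩
  obtain ⟨i₀, χ, hχ, hat, -⟩ := hev2.exists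
  apply hn χ hχ
  rw [atomic_realize_rp' F M v x hx hat]
  filter_upwards [hev2] with i hi
  obtain ⟨χ', hχ', hat', hr⟩ := hi
  obtain ⟨p, rfl⟩ := List.get_of_mem hχ
  obtain ⟨q, rfl⟩ := List.get_of_mem hχ'
  rw [hu p q hat hat']
  exact hr

theorem realize_congr_free {α : Type u'} {M : Type v'} [L.Structure M] [DecidableEq α]
    (φ : L.Formula α) (v v' : α → M) (h : ∀ a ∈ BoundedFormula.freeVarFinset φ, v a = v' a) :
    φ.Realize v ↔ φ.Realize v' := by
  have h1 := BoundedFormula.realize_restrictFreeVar (φ := φ) (f := Subtype.val) (v := v)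
    (xs := default) v (fun _ => rfl)
  have h2 := BoundedFormula.realize_restrictFreeVar (φ := φ) (f := Subtype.val) (v := v)
    (xs := default) v' (fun a => h a.1 a.2)
  exact h1.symm.trans h2

theorem exists_model {L : FirstOrder.Language.{u, u}} (K : Set (SStruct.{u} L)) (A : SStruct.{u} L)
    (hA : ∀ φ : L.Formula ℕ, IsBasicHorn φ → (∀ M ∈ K, SatAll (M : Type u) φ) →
      SatAll (A : Type u) φ)
    (S : Finset (L.Formula A)) (hS : ∀ φ ∈ S, BoundedFormula.IsAtomic φ ∧ φ.Realize (id : A → A))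
    (ψ : L.Formula A) (hψ : BoundedFormula.IsAtomic ψ ∨ ∃ θ : L.Formula A,
      BoundedFormula.IsAtomic θ ∧ ψ = θ.not) (hψA : ¬ ψ.Realize (id : A → A)) :
    ∃ B ∈ K, ∃ v : A → (B : Type u), (∀ φ ∈ S, φ.Realize v) ∧ ¬ ψ.Realize v := by
  classical
  by_contra hcon
  push Not at hcon
  let V : Finset A := BoundedFormula.freeVarFinset ψ ∪
    S.biUnion fun φ => BoundedFormula.freeVarFinset φ
  obtain ⟨g, k, hgk⟩ : ∃ (g : A → ℕ) (k : ℕ → A), ∀ a ∈ V, k (g a) = a := by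
    obtain ⟨f, hf⟩ := Countable.exists_injective_nat V
    let g : A → ℕ := fun a => if h : a ∈ V then f ⟨a, h⟩ else 0
    have hg : Set.InjOn g V := by
      intro a ha b hb hab
      have ha' : a ∈ V := ha
      have hb' : b ∈ V := hb
      simp only [g, ha', hb', dif_pos] at hab
      exact congrArg Subtype.val (hf hab)
    exact ⟨g, Function.invFunOn g V, fun a ha => hg.leftInvOn_invFunOn ha⟩
  have hrel : ∀ φ : L.Formula A, BoundedFormula.freeVarFinset φ ⊆ V →
      ((φ.relabel g).Realize k ↔ φ.Realize (id : A → A)) := by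
    intro φ hφ
    rw [Formula.realize_relabel]
    exact realize_congr_free φ _ _ fun a ha => hgk a (hφ ha)
  have hat : ∀ φ : L.Formula A, BoundedFormula.IsAtomic φ →
      BoundedFormula.IsAtomic (φ.relabel g) := fun φ h => h.relabel _
  have hnot : ∀ φ : L.Formula A, φ.not.relabel g = (φ.relabel g).not := fun φ => rfl
  let l : List (L.Formula ℕ) := S.toList.map fun φ => (φ.relabel g).not
  have hl : ∀ χ ∈ l, ∃ φ ∈ S, χ = (φ.relabel g).not := by
    intro χ hχ
    obtain ⟨φ, hφ, rfl⟩ := List.mem_map.1 hχ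
    exact ⟨φ, Finset.mem_toList.1 hφ, rfl⟩
  have horn : IsBasicHorn (orList (ψ.relabel g) l) := by
    refine ⟨_, _, rfl, ?_, ?_⟩
    · intro χ hχ
      rcases List.mem_cons.1 hχ with rfl | hχ
      · rcases hψ with h | ⟨θ, h, rfl⟩
        · exact Or.inl (hat _ h)
        · exact Or.inr ⟨_, hat _ h, hnot _⟩
      · obtain ⟨φ, hφ, rfl⟩ := hl χ hχ
        exact Or.inr ⟨_, hat _ (hS φ hφ).1, rfl⟩
    · have h0 : ∀ i : Fin (ψ.relabel g :: l).length,
          BoundedFormula.IsAtomic ((ψ.relabel g :: l).get i) → i.1 = 0 := by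
        rintro ⟨i, hi⟩ h
        cases i with
        | zero => rfl
        | succ i =>
          exfalso
          obtain ⟨φ, -, he⟩ := hl (l.get ⟨i, by simpa using hi⟩) (List.get_mem _ _)
          have h' : BoundedFormula.IsAtomic (l.get ⟨i, by simpa using hi⟩) := h
          rw [he] at h'
          exact not_isAtomic_not _ h'
      intro i j hi hj
      exact Fin.ext ((h0 i hi).trans (h0 j hj).symm)
  have := hA _ horn ?_ k
  · rw [realize_orList] at this
    obtain ⟨χ, hχ, hr⟩ := this
    rcases List.mem_cons.1 hχ with rfl | hχ
    · exact hψA ((hrel ψ Finset.subset_union_left).1 hr)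
    · obtain ⟨φ, hφ, rfl⟩ := hl χ hχ
      rw [Formula.realize_not] at hr
      refine hr ((hrel φ ?_).2 (hS φ hφ).2)
      exact (Finset.subset_biUnion_of_mem
        (fun φ : L.Formula A => BoundedFormula.freeVarFinset φ) hφ).trans Finset.subset_union_right
  · intro M hM v
    rw [realize_orList]
    by_contra hn
    push Not at hn
    apply hn _ List.mem_cons_self
    rw [Formula.realize_relabel]
    apply hcon M hM
    intro φ hφ
    have := hn ((φ.relabel g).not) (List.mem_cons_of_mem _
      (List.mem_map.2 ⟨φ, Finset.mem_toList.2 hφ, rfl⟩))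
    rwa [Formula.realize_not, not_not, Formula.realize_relabel] at this

theorem exists_embedding {L : FirstOrder.Language.{u, u}} (K : Set (SStruct.{u} L))
    (A : SStruct.{u} L)
    (hA : ∀ φ : L.Formula ℕ, IsBasicHorn φ → (∀ M ∈ K, SatAll (M : Type u) φ) →
      SatAll (A : Type u) φ) :
    ∃ (ι : Type u) (F : Filter ι) (_ : F.NeBot) (B : ι → SStruct.{u} L), (∀ i, B i ∈ K) ∧
      Nonempty ((A : Type u) ↪[L] F.Product fun i => (B i : Type u)) := by
  classical
  let P := {φ : L.Formula A // BoundedFormula.IsAtomic φ ∧ φ.Realize (id : A → A)}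
  let N := {ψ : L.Formula A // (BoundedFormula.IsAtomic ψ ∨ ∃ θ : L.Formula A,
      BoundedFormula.IsAtomic θ ∧ ψ = θ.not) ∧ ¬ ψ.Realize (id : A → A)}
  have hN : Nonempty N := by
    obtain ⟨a⟩ := A.nonempty
    refine ⟨⟨(Term.equal (var a) (var a) : L.Formula A).not, Or.inr ⟨_, ?_, rfl⟩, ?_⟩⟩
    · exact BoundedFormula.IsAtomic.equal _ _
    · simp [Formula.realize_not, Formula.realize_equal]
  have hex : ∀ i : Finset P × N, ∃ B ∈ K, ∃ v : A → (B : Type u),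
      (∀ φ ∈ i.1, φ.1.Realize v) ∧ ¬ i.2.1.Realize v := by
    rintro ⟨S, ψ⟩
    obtain ⟨B, hB, v, h1, h2⟩ := exists_model K A hA (S.image Subtype.val) (by
      intro φ hφ
      obtain ⟨p, -, rfl⟩ := Finset.mem_image.1 hφ
      exact p.2) ψ.1 ψ.2.1 ψ.2.2
    exact ⟨B, hB, v, fun φ hφ => h1 _ (Finset.mem_image_of_mem _ hφ), h2⟩
  choose B hB v hv1 hv2 using hex
  let F : Filter (Finset P × N) := Filter.comap Prod.fst atTop
  have hF : F.NeBot := Filter.NeBot.comap_of_surj inferInstance Prod.fst_surjective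
  let e : A → F.Product fun i => (B i : Type u) := fun a =>
    Quotient.mk (F.productSetoid fun i => (B i : Type u)) fun i => v i a
  have key : ∀ φ : L.Formula A, BoundedFormula.IsAtomic φ →
      (φ.Realize e ↔ φ.Realize (id : A → A)) := by
    intro φ hφ
    rw [atomic_realize_rp' F (fun i => (B i : Type u)) e (fun a i => v i a) rfl hφ]
    constructor
    · intro h
      by_contra hc
      obtain ⟨S, hS, hsub⟩ := Filter.mem_comap.1 h
      obtain ⟨T, hT⟩ := Filter.Eventually.exists (f := atTop) (p := fun T => T ∈ S) hS
      exact hv2 (T, ⟨φ, Or.inl hφ, hc⟩) (hsub (show (T, _).1 ∈ S from hT))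
    · intro h
      refine Filter.mem_comap.2 ⟨Set.Ici {⟨φ, hφ, h⟩}, Filter.Ici_mem_atTop _, ?_⟩
      rintro ⟨T, ψ⟩ hT
      exact hv1 (T, ψ) ⟨φ, hφ, h⟩ (hT (Finset.mem_singleton_self _))
  refine ⟨_, F, hF, B, hB, ⟨⟨⟨e, ?_⟩, ?_, ?_⟩⟩⟩
  · intro a b hab
    have := (key (Term.equal (var a) (var b)) (BoundedFormula.IsAtomic.equal _ _)).1 (by
      rw [Formula.realize_equal]; exact hab)
    rw [Formula.realize_equal] at this
    exact this
  · intro n f x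
    have := (key (Term.equal (var (funMap f x)) (func f fun k => var (x k)))
      (BoundedFormula.IsAtomic.equal _ _)).2 (by
        rw [Formula.realize_equal]; rfl)
    rw [Formula.realize_equal] at this
    exact this
  · intro n r x
    have := key (r.formula fun k => var (x k)) (BoundedFormula.IsAtomic.rel _ _)
    rw [Formula.realize_rel, Formula.realize_rel] at this
    exact this

end Aux

/-- Theorem 5 (Hodges 9.4.7): a class of structures is axiomatized by a set of basic Horn
formulas iff it is closed under isomorphisms, substructures, and reduced products. -/
theorem basicHorn_axiomatizable_iff {L : FirstOrder.Language.{u, u}}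
    (K : Set (SStruct.{u} L)) :
    (∃ Γ : Set (L.Formula ℕ), (∀ φ ∈ Γ, IsBasicHorn φ) ∧ AxiomatizedBy L K Γ) ↔
      (ClosedUnderIso L K ∧ ClosedUnderSubstructures L K ∧
        ClosedUnderReducedProducts L K) := by
  constructor
  · rintro ⟨Γ, hΓ, hax⟩
    refine ⟨?_, ?_, ?_⟩
    · rintro M hM N ⟨e⟩
      rw [hax] at hM ⊢
      exact fun φ hφ => satAll_embedding e.symm.toEmbedding (hΓ φ hφ) (hM φ hφ)
    · intro M hM S hS
      rw [hax] at hM ⊢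
      exact fun φ hφ => satAll_embedding S.subtype (hΓ φ hφ) (hM φ hφ)
    · intro ι F hF B hB
      rw [hax]
      exact fun φ hφ => satAll_rp F (fun i => (B i : Type u)) (hΓ φ hφ)
        fun i => (hax _).1 (hB i) φ hφ
  · rintro ⟨hiso, hsub, hrp⟩
    refine ⟨{φ | IsBasicHorn φ ∧ ∀ M ∈ K, SatAll (M : Type u) φ}, fun φ h => h.1, fun A =>
      ⟨fun hA φ hφ => hφ.2 A hA, fun hA => ?_⟩⟩
    obtain ⟨ι, F, hF, B, hB, ⟨e⟩⟩ := exists_embedding K A fun φ h1 h2 => hA φ ⟨h1, h2⟩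
    have h1 := hrp ι F hF B hB
    have hne : Nonempty e.toHom.range := e.equivRange.toEquiv.nonempty_congr.1 A.nonempty
    exact hiso _ (hsub _ h1 e.toHom.range hne) A ⟨e.equivRange.symm⟩

end ZFHorn
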